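/- Let (x̂, π̂) be dual-feasible and let (x, z) ∈ ℝ^n × ℝ^m satisfy Ax + z ≥ b and z ≥ 0. Then f(x) + ‖π̂‖∞·1ᵀz − ψ(x̂, π̂) ≥ 0; consequently the function g(φ) := (f(x) + φ·1ᵀz − ψ(x̂, π̂)) / (φ − ‖π̂‖∞) is nonincreasing on the interval (‖π̂‖∞, ∞). (Key step in the proof of Lemma 3.3.) -/

import Mathlib

open Matrix Filter

/-- The quadratic objective f(x) = (1/2) xᵀHx + cᵀx. -/
noncomputable def qObj {n : ℕ} (H : Matrix (Fin n) (Fin n) ℝ) (c : Fin n → ℝ)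
    (x : Fin n → ℝ) : ℝ :=
  (1 / 2) * (x ⬝ᵥ H.mulVec x) + c ⬝ᵥ x

/-- The dual objective ψ(x̂, π̂) = −(1/2)x̂ᵀHx̂ + bᵀπ̂. -/
noncomputable def dObj {n m : ℕ} (H : Matrix (Fin n) (Fin n) ℝ) (b : Fin m → ℝ)
    (xhat : Fin n → ℝ) (pihat : Fin m → ℝ) : ℝ :=
  -(1 / 2) * (xhat ⬝ᵥ H.mulVec xhat) + b ⬝ᵥ pihat

/-!
The gap `f(x) - ψ(x̂, π̂)` equals `(1/2)(x - x̂)ᵀH(x - x̂) + (Ax - b)ᵀπ̂`. The first term is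
nonnegative, and `Ax - b ≥ -z` bounds the second below by `-zᵀπ̂ ≥ -‖π̂‖∞·1ᵀz` (Hölder).
Writing `s = 1ᵀz`, the function `g` is `s` plus a nonnegative constant over `φ - ‖π̂‖∞`.
-/

section DotProduct

variable {ι R : Type*} [Fintype ι]

theorem sub_dotProduct_mulVec_sub_of_isSymm [CommRing R] {H : Matrix ι ι R} (hH : H.IsSymm)
    (x y : ι → R) :
    (x - y) ⬝ᵥ H *ᵥ (x - y) = x ⬝ᵥ H *ᵥ x - 2 * (x ⬝ᵥ H *ᵥ y) + y ⬝ᵥ H *ᵥ y := by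
  have hcomm : y ⬝ᵥ H *ᵥ x = x ⬝ᵥ H *ᵥ y := by
    rw [← dotProduct_transpose_mulVec, hH.eq]
  rw [mulVec_sub, sub_dotProduct, dotProduct_sub, dotProduct_sub, hcomm]
  ring

theorem dotProduct_le_norm_mul_sum (p : ι → ℝ) {z : ι → ℝ} (hz : 0 ≤ z) :
    p ⬝ᵥ z ≤ ‖p‖ * ∑ i, z i := by
  have hp : p ≤ ‖p‖ • 1 := fun i ↦ by
    simpa using (Real.le_norm_self (p i)).trans (norm_le_pi_norm p i)
  calc p ⬝ᵥ z ≤ (‖p‖ • 1) ⬝ᵥ z := dotProduct_le_dotProduct_of_nonneg_right hp hz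
    _ = ‖p‖ * ∑ i, z i := by rw [smul_dotProduct, one_dotProduct, smul_eq_mul]

end DotProduct

theorem antitoneOn_add_mul_div_sub {K : Type*} [Field K] [LinearOrder K] [IsStrictOrderedRing K]
    {a s p : K} (h : 0 ≤ a + p * s) :
    AntitoneOn (fun t ↦ (a + t * s) / (t - p)) (Set.Ioi p) := by
  have hsplit : ∀ t ∈ Set.Ioi p, s + (a + p * s) / (t - p) = (a + t * s) / (t - p) := by
    intro t ht
    have : t - p ≠ 0 := (sub_pos.mpr ht).ne'
    field_simp
    ring
  refine AntitoneOn.congr (fun t ht u _ htu ↦ ?_) hsplit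
  have : 0 < t - p := sub_pos.mpr ht
  gcongr

section Duality

variable {n m : ℕ} {H : Matrix (Fin n) (Fin n) ℝ} {c : Fin n → ℝ} {A : Matrix (Fin m) (Fin n) ℝ}
  {xhat : Fin n → ℝ} {pihat : Fin m → ℝ}

theorem qObj_sub_dObj_eq (hH : H.IsSymm) (hdual : H *ᵥ xhat + c = Aᵀ *ᵥ pihat)
    (b : Fin m → ℝ) (x : Fin n → ℝ) :
    qObj H c x - dObj H b xhat pihat =
      1 / 2 * ((x - xhat) ⬝ᵥ H *ᵥ (x - xhat)) + pihat ⬝ᵥ (A *ᵥ x - b) := by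
  have hstationary : x ⬝ᵥ H *ᵥ xhat + c ⬝ᵥ x = pihat ⬝ᵥ A *ᵥ x := by
    rw [dotProduct_comm c, ← dotProduct_add, hdual, dotProduct_transpose_mulVec]
  rw [qObj, dObj, sub_dotProduct_mulVec_sub_of_isSymm hH, dotProduct_sub, ← hstationary,
    dotProduct_comm b]
  ring

theorem dObj_le_qObj_add_dotProduct (hH : H.PosSemidef) (hdual : H *ᵥ xhat + c = Aᵀ *ᵥ pihat)
    (hpihat : 0 ≤ pihat) {b : Fin m → ℝ} {x : Fin n → ℝ} {z : Fin m → ℝ}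
    (hfeas : b ≤ A *ᵥ x + z) :
    dObj H b xhat pihat ≤ qObj H c x + pihat ⬝ᵥ z := by
  have hquad : 0 ≤ (x - xhat) ⬝ᵥ H *ᵥ (x - xhat) := by
    simpa only [star_trivial] using hH.dotProduct_mulVec_nonneg (x - xhat)
  have hslack : 0 ≤ pihat ⬝ᵥ (A *ᵥ x - b) + pihat ⬝ᵥ z := by
    rw [← dotProduct_add, sub_add_eq_add_sub]
    exact dotProduct_nonneg_of_nonneg hpihat (sub_nonneg.mpr hfeas)
  have hgap := qObj_sub_dObj_eq (isHermitian_iff_isSymm.mp hH.isHermitian) hdual b x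
  linarith

end Duality

/-- key step in the proof of Lemma 3.3:
f(x) + ‖π̂‖∞·1ᵀz − ψ(x̂,π̂) ≥ 0, and consequently
g(φ) = (f(x) + φ·1ᵀz − ψ(x̂,π̂))/(φ − ‖π̂‖∞) is nonincreasing on (‖π̂‖∞, ∞). -/
theorem g_nonincreasing
    {n m : ℕ} (H : Matrix (Fin n) (Fin n) ℝ) (hH : H.PosSemidef)
    (c : Fin n → ℝ) (A : Matrix (Fin m) (Fin n) ℝ) (b : Fin m → ℝ)
    (xhat : Fin n → ℝ) (pihat : Fin m → ℝ)
    (hdeq : H.mulVec xhat + c - Aᵀ.mulVec pihat = 0) (hdpos : 0 ≤ pihat)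
    (x : Fin n → ℝ) (z : Fin m → ℝ)
    (hfeas : b ≤ A.mulVec x + z) (hz : 0 ≤ z) :
    0 ≤ qObj H c x + ‖pihat‖ * (∑ i, z i) - dObj H b xhat pihat ∧
    ∀ φ₁ φ₂ : ℝ, ‖pihat‖ < φ₁ → φ₁ ≤ φ₂ →
      (qObj H c x + φ₂ * (∑ i, z i) - dObj H b xhat pihat) / (φ₂ - ‖pihat‖) ≤
      (qObj H c x + φ₁ * (∑ i, z i) - dObj H b xhat pihat) / (φ₁ - ‖pihat‖) := by
  have hgap : 0 ≤ qObj H c x + ‖pihat‖ * (∑ i, z i) - dObj H b xhat pihat :=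
    sub_nonneg.mpr <| calc
      dObj H b xhat pihat ≤ qObj H c x + pihat ⬝ᵥ z :=
        dObj_le_qObj_add_dotProduct hH (sub_eq_zero.mp hdeq) hdpos hfeas
      _ ≤ qObj H c x + ‖pihat‖ * (∑ i, z i) := by
        gcongr
        exact dotProduct_le_norm_mul_sum pihat hz
  refine ⟨hgap, fun φ₁ φ₂ hφ₁ hφ₁₂ ↦ ?_⟩
  simp only [add_sub_right_comm] at hgap ⊢
  exact antitoneOn_add_mul_div_sub hgap hφ₁ (hφ₁.trans_le hφ₁₂) hφ₁₂
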